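/- For every integer h divisible by 4 with h ≥ 4, the quantity μ(h) satisfies √(2h/π) + 0.9 < μ(h) < √(2h/π) + 1, and μ is monotonic increasing along multiples of 4, i.e. μ(h) < μ(h+4). -/

import Mathlib

/-- `μ(h) = 1 + 2^{−h} h binom(h, h/2)`. -/
noncomputable def mu (h : ℕ) : ℝ :=
  1 + (2 : ℝ) ^ (-(h : ℤ)) * h * (h.choose (h / 2) : ℝ)

/-!
Write `c n = binom(2n, n) / 4 ^ n`, so that `mu (2 * n) = 1 + 2 * n * c n`. For a real shift `d`,
the sequence `c n ^ 2 * (n + d)` tends to `1 / π` by Wallis' product, and its increments have the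
sign of `(1 - 4 * d) * n + 1 - 3 * d`. For `d = 0` it is strictly increasing, hence below `1 / π`,
which is the upper bound. For `d = 3 / 11` it is nonincreasing from `n = 2` on, hence at least
`1 / π` there, and this is sharp enough for the lower bound.
-/

open Filter Topology

/-- The probability that `2 * n` fair coin tosses give exactly `n` heads; the normalization of the
central binomial coefficient through which `mu` is studied at even arguments. -/
noncomputable def centralProb (n : ℕ) : ℝ := n.centralBinom / 4 ^ n

lemma centralProb_pos (n : ℕ) : 0 < centralProb n :=
  div_pos (mod_cast n.centralBinom_pos) (by positivity)

lemma two_mul_succ_mul_centralProb_succ (n : ℕ) :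
    2 * ((n : ℝ) + 1) * centralProb (n + 1) = (2 * n + 1) * centralProb n := by
  have recurrence : ((n : ℝ) + 1) * (n + 1).centralBinom = 2 * (2 * n + 1) * n.centralBinom :=
    mod_cast n.succ_mul_centralBinom_succ
  unfold centralProb
  linear_combination recurrence / (2 * 4 ^ n)

lemma centralProb_succ (n : ℕ) :
    centralProb (n + 1) = (2 * n + 1) / (2 * (n + 1)) * centralProb n := by
  rw [div_mul_eq_mul_div, eq_div_iff (by positivity), ← two_mul_succ_mul_centralProb_succ, mul_comm]

lemma centralProb_sq_mul_wallis (n : ℕ) :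
    centralProb n ^ 2 * (2 * n + 1) * Real.Wallis.W n = 1 := by
  induction n with
  | zero => simp [centralProb, Real.Wallis.W]
  | succ n ih =>
    rw [Real.Wallis.W_succ, centralProb_succ]
    push_cast
    field_simp
    linear_combination (2 * (n : ℝ) + 3) * ih

lemma tendsto_centralProb_sq_mul_add (d : ℝ) :
    Tendsto (fun n : ℕ ↦ centralProb n ^ 2 * (n + d)) atTop (𝓝 (1 / Real.pi)) := by
  have tendsto_shift : Tendsto (fun n : ℕ ↦ (n + d) / (2 * n + 1)) atTop (𝓝 (1 / 2)) := by
    simpa [add_comm] using tendsto_add_mul_div_add_mul_atTop_nhds d 1 1 (two_ne_zero (α := ℝ))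
  have tendsto_quotient := tendsto_shift.div Real.Wallis.tendsto_W_nhds_pi_div_two (by positivity)
  convert tendsto_quotient using 1
  · ext n
    have W_pos := Real.Wallis.W_pos n
    simp only [Pi.div_apply]
    field_simp
    linear_combination (n + d) * centralProb_sq_mul_wallis n
  · field_simp

lemma centralProb_sq_mul_add_succ_sub (d : ℝ) (n : ℕ) :
    centralProb (n + 1) ^ 2 * ((n + 1 : ℕ) + d) - centralProb n ^ 2 * (n + d) =
      centralProb n ^ 2 * ((1 - 4 * d) * n + 1 - 3 * d) / (4 * (n + 1) ^ 2) := by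
  rw [centralProb_succ]
  push_cast
  field_simp
  ring

lemma strictMono_centralProb_sq_mul_add {d : ℝ} (hd : d ≤ 1 / 4) :
    StrictMono fun n : ℕ ↦ centralProb n ^ 2 * (n + d) := by
  refine strictMono_nat_of_lt_succ fun n ↦ ?_
  have numerator_pos : 0 < (1 - 4 * d) * n + 1 - 3 * d := by
    have : 0 ≤ (1 - 4 * d) * n := mul_nonneg (by linarith) n.cast_nonneg
    linarith
  have prob_pos := centralProb_pos n
  rw [← sub_pos, centralProb_sq_mul_add_succ_sub]
  positivity

lemma centralProb_sq_mul_add_lt {d : ℝ} (hd : d ≤ 1 / 4) (n : ℕ) :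
    centralProb n ^ 2 * (n + d) < 1 / Real.pi :=
  (strictMono_centralProb_sq_mul_add hd n.lt_succ_self).trans_le <|
    (strictMono_centralProb_sq_mul_add hd).monotone.ge_of_tendsto
      (tendsto_centralProb_sq_mul_add d) (n + 1)

lemma antitoneOn_centralProb_sq_mul_add {d : ℝ} {m : ℕ} (hd : 1 / 4 ≤ d)
    (hm : 1 - 3 * d ≤ (4 * d - 1) * m) :
    AntitoneOn (fun n : ℕ ↦ centralProb n ^ 2 * (n + d)) (Set.Ici m) := by
  refine antitoneOn_nat_Ici_of_succ_le fun n hn ↦ ?_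
  have numerator_nonpos : (1 - 4 * d) * n + 1 - 3 * d ≤ 0 := by
    have : (4 * d - 1) * m ≤ (4 * d - 1) * n :=
      mul_le_mul_of_nonneg_left (mod_cast hn) (by linarith)
    linarith
  rw [← sub_nonpos, centralProb_sq_mul_add_succ_sub]
  exact div_nonpos_of_nonpos_of_nonneg
    (mul_nonpos_of_nonneg_of_nonpos (sq_nonneg _) numerator_nonpos) (by positivity)

lemma le_centralProb_sq_mul_add {d : ℝ} {n : ℕ} (hd : 1 / 4 ≤ d)
    (hn : 1 - 3 * d ≤ (4 * d - 1) * n) :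
    1 / Real.pi ≤ centralProb n ^ 2 * (n + d) := by
  refine le_of_tendsto (tendsto_centralProb_sq_mul_add d) ?_
  filter_upwards [eventually_ge_atTop n] with k hk
  exact antitoneOn_centralProb_sq_mul_add hd hn Set.self_mem_Ici hk hk

lemma mu_two_mul (n : ℕ) : mu (2 * n) = 1 + 2 * n * centralProb n := by
  rw [mu, centralProb, Nat.mul_div_cancel_left n two_pos, ← Nat.centralBinom_eq_two_mul_choose,
    zpow_neg, zpow_natCast, pow_mul]
  norm_num
  ring

lemma strictMono_mu_two_mul : StrictMono fun n ↦ mu (2 * n) := by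
  refine strictMono_nat_of_lt_succ fun n ↦ ?_
  rw [mu_two_mul, mu_two_mul]
  push_cast
  linarith [two_mul_succ_mul_centralProb_succ n, centralProb_pos n]

lemma mu_two_mul_lt {n : ℕ} (hn : 0 < n) : mu (2 * n) < √(4 * n / Real.pi) + 1 := by
  have : (0 : ℝ) < n := mod_cast hn
  have sq_lt : (2 * n * centralProb n) ^ 2 < 4 * n / Real.pi :=
    calc (2 * n * centralProb n) ^ 2
        = 4 * n * (centralProb n ^ 2 * (n + 0)) := by ring
      _ < 4 * n * (1 / Real.pi) := by
          gcongr
          exact centralProb_sq_mul_add_lt (by norm_num) n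
      _ = 4 * n / Real.pi := by ring
  linarith [mu_two_mul n, Real.lt_sqrt_of_sq_lt sq_lt]

lemma sqrt_sub_sq_mul_add_lt {x : ℝ} (hx : 2 ≤ x) :
    (√(4 * x / Real.pi) - 0.1) ^ 2 * (x + 3 / 11) < 4 * x ^ 2 / Real.pi := by
  have hπ := Real.pi_gt_d2
  have s_sq : √(4 * x / Real.pi) ^ 2 = 4 * x / Real.pi := Real.sq_sqrt (by positivity)
  have s_ge : 1.595 ≤ √(4 * x / Real.pi) := by
    refine Real.le_sqrt_of_sq_le ((le_div_iff₀ Real.pi_pos).2 ?_)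
    linarith [Real.pi_lt_d4]
  set s := √(4 * x / Real.pi)
  have x_eq : x = Real.pi / 4 * s ^ 2 := by rw [s_sq]; field_simp
  have cubic_bound : 3 / 11 * s ^ 2 < (0.2 * s - 0.01) * (3.14 / 4 * s ^ 2 + 3 / 11) := by
    -- The difference of the two sides has positive Taylor coefficients at `s = 1.595`.
    linarith [pow_nonneg (sub_nonneg.2 s_ge) 2, pow_nonneg (sub_nonneg.2 s_ge) 3]
  have pi_bound : (0.2 * s - 0.01) * (3.14 / 4 * s ^ 2 + 3 / 11) ≤
      (0.2 * s - 0.01) * (x + 3 / 11) := by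
    rw [x_eq]
    gcongr
    linarith
  calc (s - 0.1) ^ 2 * (x + 3 / 11)
      = s ^ 2 * x + 3 / 11 * s ^ 2 - (0.2 * s - 0.01) * (x + 3 / 11) := by ring
    _ < s ^ 2 * x := by linarith
    _ = 4 * x ^ 2 / Real.pi := by rw [s_sq]; ring

lemma lt_mu_two_mul {n : ℕ} (hn : 2 ≤ n) : √(4 * n / Real.pi) + 0.9 < mu (2 * n) := by
  have hn' : (2 : ℝ) ≤ n := mod_cast hn
  have prob_pos := centralProb_pos n
  have sq_mul_lt : (√(4 * n / Real.pi) - 0.1) ^ 2 * (n + 3 / 11) <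
      (2 * n * centralProb n) ^ 2 * (n + 3 / 11) :=
    calc (√(4 * n / Real.pi) - 0.1) ^ 2 * (n + 3 / 11)
        < 4 * (n : ℝ) ^ 2 / Real.pi := sqrt_sub_sq_mul_add_lt hn'
      _ = 4 * n ^ 2 * (1 / Real.pi) := by ring
      _ ≤ 4 * n ^ 2 * (centralProb n ^ 2 * (n + 3 / 11)) := by
          gcongr
          exact le_centralProb_sq_mul_add (by norm_num) (by linarith)
      _ = (2 * n * centralProb n) ^ 2 * (n + 3 / 11) := by ring
  have sqrt_sub_lt : √(4 * n / Real.pi) - 0.1 < 2 * n * centralProb n :=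
    lt_of_pow_lt_pow_left₀ 2 (by positivity) (lt_of_mul_lt_mul_right sq_mul_lt (by positivity))
  linarith [mu_two_mul n]

theorem mu_bounds_and_mono_general (h : ℕ) (h2 : 2 ∣ h) (hh : 4 ≤ h) :
    Real.sqrt (2 * h / Real.pi) + 0.9 < mu h ∧
    mu h < Real.sqrt (2 * h / Real.pi) + 1 ∧
    mu h < mu (h + 2) := by
  obtain ⟨n, rfl⟩ := h2
  have cast_eq : (2 : ℝ) * (2 * n : ℕ) = 4 * n := by push_cast; ring
  rw [cast_eq]
  exact ⟨lt_mu_two_mul (by lia), mu_two_mul_lt (by lia), strictMono_mu_two_mul n.lt_succ_self⟩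

/-- For every integer `h` divisible by `4` with `h ≥ 4`:
`√(2h/π) + 0.9 < μ(h) < √(2h/π) + 1`, and `μ` is monotonic increasing
along multiples of `4`, i.e. `μ(h) < μ(h+4)`. -/
theorem mu_bounds_and_mono (h : ℕ) (h4 : 4 ∣ h) (hh : 4 ≤ h) :
    Real.sqrt (2 * h / Real.pi) + 0.9 < mu h ∧
    mu h < Real.sqrt (2 * h / Real.pi) + 1 ∧
    mu h < mu (h + 4) := by
  obtain ⟨lower, upper, mono⟩ := mu_bounds_and_mono_general h (by lia) hh
  exact ⟨lower, upper, mono.trans (mu_bounds_and_mono_general (h + 2) (by lia) (by lia)).2.2⟩
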